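/- Let W(x,y) = exp(−x/y − x²/(2y²))·y, defined for real x, y with y ≠ 0. Then (x² + xy + y²)·W_x(x,y) + (xy + y²)·W_y(x,y) = 0 at every such point; that is, W is a first integral of the vector field (x²+xy+y²) • (xy+y²), so the orbits of the corresponding flow Ξ are the transcendental curves exp(−x/y − x²/(2y²))·y = const. -/

import Mathlib

/-!
Since `W` is homogeneous of degree one, `W (x, y) = g (x / y) * y`, so that `W_x = g' u` and
`W_y = g u - u * g' u` at `u = x / y`. The field `(ϖ, ϱ)` satisfies `yϖ - xϱ = y³` (the triple
root) and `ϱ = (1 + u) y²`, hence `ϖ W_x + ϱ W_y = y² (g' u + (1 + u) g u)`. Being a first integral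
is therefore the linear equation `g' = -(1 + u) g`, solved by `g u = exp (-u - u² / 2)`.
-/

section HomogeneousOfDegreeOne

variable {𝕜 : Type*} [NontriviallyNormedField 𝕜] {g : 𝕜 → 𝕜} {g' x y : 𝕜}

theorem hasDerivAt_comp_div_mul_left (hg : HasDerivAt g g' (x / y)) (hy : y ≠ 0) :
    HasDerivAt (fun t => g (t / y) * y) g' x := by
  have hdiv : HasDerivAt (fun t => t / y) (1 / y) x := (hasDerivAt_id x).div_const y
  exact ((hg.comp x hdiv).mul_const y).congr_deriv (by field_simp)

theorem hasDerivAt_comp_div_mul_right (hg : HasDerivAt g g' (x / y)) (hy : y ≠ 0) :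
    HasDerivAt (fun t => g (x / t) * t) (g (x / y) - x / y * g') y := by
  have hdiv : HasDerivAt (fun t => x / t) (-x / y ^ 2) y := by
    simpa only [div_eq_mul_inv, neg_mul, mul_neg, one_mul] using
      (hasDerivAt_inv hy).const_mul x
  refine ((hg.comp y hdiv).mul (hasDerivAt_id' y)).congr_deriv ?_
  simp only [Function.comp_apply]
  field_simp
  ring

theorem mul_deriv_add_mul_deriv_comp_div_mul (a b : 𝕜) (hg : HasDerivAt g g' (x / y))
    (hy : y ≠ 0) :
    a * deriv (fun t => g (t / y) * y) x + b * deriv (fun t => g (x / t) * t) y =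
      (a - x / y * b) * g' + b * g (x / y) := by
  rw [(hasDerivAt_comp_div_mul_left hg hy).deriv, (hasDerivAt_comp_div_mul_right hg hy).deriv]
  ring

end HomogeneousOfDegreeOne

section RCLike

variable {𝕜 : Type*} [RCLike 𝕜]

theorem hasDerivAt_exp_neg_sub_sq_div_two (u : 𝕜) :
    HasDerivAt (fun t : 𝕜 => NormedSpace.exp (-t - t ^ 2 / 2))
      (-(1 + u) * NormedSpace.exp (-u - u ^ 2 / 2)) u := by
  have hexponent : HasDerivAt (fun t : 𝕜 => -t - t ^ 2 / 2) (-(1 + u)) u := by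
    refine ((hasDerivAt_id' u).neg.sub ((hasDerivAt_pow 2 u).div_const 2)).congr_deriv ?_
    push_cast
    ring
  exact (hasDerivAt_exp.comp u hexponent).congr_deriv (mul_comm _ _)

theorem first_integral_integral_flow_general (x y : 𝕜) (hy : y ≠ 0) :
    (x ^ 2 + x * y + y ^ 2) *
        deriv (fun t => NormedSpace.exp (-t / y - t ^ 2 / (2 * y ^ 2)) * y) x +
      (x * y + y ^ 2) *
        deriv (fun t => NormedSpace.exp (-x / t - x ^ 2 / (2 * t ^ 2)) * t) y = 0 := by
  have exponent_eq (s t : 𝕜) : -s / t - s ^ 2 / (2 * t ^ 2) = -(s / t) - (s / t) ^ 2 / 2 := by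
    ring
  have triple_root : x ^ 2 + x * y + y ^ 2 - x / y * (x * y + y ^ 2) = y ^ 2 := by
    field_simp
    ring
  have second_component : x * y + y ^ 2 = y ^ 2 * (1 + x / y) := by
    field_simp
    ring
  simp only [exponent_eq]
  rw [mul_deriv_add_mul_deriv_comp_div_mul _ _ (hasDerivAt_exp_neg_sub_sq_div_two (x / y)) hy,
    triple_root, second_component]
  ring

end RCLike

/-- `W(x,y) = exp(-x/y - x²/(2y²))·y` is a first integral of the vector field
`(x²+xy+y²) • (xy+y²)`: `(x²+xy+y²)·W_x + (xy+y²)·W_y = 0` for `y ≠ 0`. -/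
theorem first_integral_integral_flow (x y : ℝ) (hy : y ≠ 0) :
    (x ^ 2 + x * y + y ^ 2) *
        deriv (fun t => Real.exp (-t / y - t ^ 2 / (2 * y ^ 2)) * y) x +
      (x * y + y ^ 2) *
        deriv (fun t => Real.exp (-x / t - x ^ 2 / (2 * t ^ 2)) * t) y = 0 := by
  simpa only [Real.exp_eq_exp_ℝ] using first_integral_integral_flow_general x y hy
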